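/- Fix Γ > 0, θ ∈ (0, π), x₀ ∈ ℝ and y₀ > 0, and set t* = 4π y₀/(Γ sin θ) and x_hit = x₀ − y₀ cot θ. For each ε > 0 with 2ε < y₀, suppose z^ε = (z₊^ε, z₋^ε) : [0, ∞) → ℝ² × ℝ² is a solution, staying in the domain {y₊ > 0, y₋ > 0, z₊ ≠ z₋}, of the half-plane Kirchhoff system for circulations εΓ and −εΓ: εΓ·ẋ₊ = ∂H_ε/∂y₊, εΓ·ẏ₊ = −∂H_ε/∂x₊, −εΓ·ẋ₋ = ∂H_ε/∂y₋, −εΓ·ẏ₋ = −∂H_ε/∂x₋, where H_ε(x₊, y₊, x₋, y₋) = −(ε²Γ²/2π)·log(√((x₊−x₋)² + (y₊+y₋)²)/√((x₊−x₋)² + (y₊−y₋)²)) + (ε²Γ²/4π)·log(2y₊) + (ε²Γ²/4π)·log(2y₋), with initial data z_±^ε(0) = (x₀ ± ε sin θ, y₀ ∓ ε cos θ). Define the comparison trajectories: for t < t*, z̃_±^ε(t) = (x₀ ± ε sin θ, y₀ ∓ ε cos θ) + (Γ/4π)·t·(−cos θ, −sin θ); and for t > t*, z̃_±^ε(t) =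 (x_hit ± (t − t*)·Γ/(4π(√(1 + cos²θ) ∓ cos θ)), ε·(√(1 + cos²θ) ∓ cos θ)). Then for every t ≥ 0 with t ≠ t*, ‖z_±^ε(t) − z̃_±^ε(t)‖ → 0 as ε → 0: before time t* the dipole travels in a straight line toward the boundary, and after time t* it has split into two vortices traveling along the boundary in opposite directions at speeds Γ/(4π(√(1 + cos²θ) ∓ cos θ)) and at heights ε(√(1 + cos²θ) ∓ cos θ). -/

import Mathlib

/-! With `c = cos θ`, `S = sin θ`, `g = Γ / 4π`, the two-vortex system is reduced by its two conserved
quantities: the impulse `y₊ - y₋ = -2εc`, and the energy, which amounts to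
`1 / |z₊ - z₋|² + 1 / (4 y₊ y₋) = 1 / (4κε²)` with `κ → 1`.  Writing `s = y₊ + y₋`, `a = x₊ - x₋`,
`X = x₊ + x₋` and `q = κε² / (y₊ y₋) ∈ (0, 1)`, the equations become

  `s' = -(g/κε) a (1 - q)²`,  `a' = (g/κε) s q²`,  `X' = -(2gc/κ) (1 - 2q)`,

where `s² = 4κε²/q + 4ε²c²` and `a² = 4κε²/(1 - q) - 4ε²c²` (`Reduced`, `reduced_of_velocities`).
All right-hand sides are thus functions of `q`, bounded uniformly in `ε`: `q ≈ 0` gives the free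
dipole and `q ≈ 1` two separated vortices running along the boundary.

The proof shows in integrated form that `q` passes from `0` to `1` at the time of impact.  Since `a`
is increasing, `a ≥ 2εS`; hence `-s' ≥ 2gS (1 - q)²`, so that the available height bounds the time
integral of `(1 - q)²`; similarly `a' ≥ g q²`, so that `a` bounds the time integral of `q²`.

* Before the impact, a correction of order `ε²/s` to `s` gives a lower bound for the height
  (`Reduced.s_lower`), so `s` stays away from `0`.  Then `q` and `a` are `O(ε²)` and `O(ε)`, hence
  `∫ q → 0`, and the motion is the free one (`tendsto_before`).
* At the impact, `s → 0`, `a → 0` and `X` converges, by monotonicity of `s` and uniform Lipschitz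
  bounds for `a` and `X` (`tendsto_impact`).
* After the impact, the remaining height tends to `0`, hence `∫ (1 - q) → 0`, and `a` and `X` grow
  at their rates for `q = 1` (`tendsto_after`).

The double limits are organised by a free parameter `η`, through `2x ≤ η + x²/η`, which converts
bounds on `∫ x²` into bounds on `∫ x` (`tendsto_zero_of_bounds`). -/

open Real Filter Topology Set

/-! ### Calculus preliminaries -/

lemma image_sub_le_of_deriv_le {f f' : ℝ → ℝ} {C t₁ t₂ : ℝ}
    (hf : ∀ t ∈ Set.Ici (0:ℝ), HasDerivWithinAt f (f' t) (Set.Ici 0) t)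
    (hC : ∀ t ∈ Set.Ici (0:ℝ), f' t ≤ C) (h₁ : 0 ≤ t₁) (h₁₂ : t₁ ≤ t₂) :
    f t₂ - f t₁ ≤ C * (t₂ - t₁) := by
  have hd : ∀ t ∈ interior (Set.Ici (0:ℝ)), HasDerivAt f (f' t) t := fun t ht =>
    (hf t (interior_subset ht)).hasDerivAt (mem_interior_iff_mem_nhds.1 ht)
  refine (convex_Ici (0:ℝ)).image_sub_le_mul_sub_of_deriv_le
    (fun t ht => (hf t ht).continuousWithinAt)
    (fun t ht => (hd t ht).differentiableAt.differentiableWithinAt)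
    (fun t ht => ?_) t₁ h₁ t₂ (h₁.trans h₁₂) h₁₂
  rw [(hd t ht).deriv]
  exact hC t (interior_subset ht)

lemma eq_of_deriv_eq_zero {f f' : ℝ → ℝ} {t : ℝ}
    (hf : ∀ t ∈ Set.Ici (0:ℝ), HasDerivWithinAt f (f' t) (Set.Ici 0) t)
    (h0 : ∀ t ∈ Set.Ici (0:ℝ), f' t = 0) (ht : 0 ≤ t) : f t = f 0 := by
  have h1 := image_sub_le_of_deriv_le hf (fun t ht => (h0 t ht).le) le_rfl ht
  have h2 := image_sub_le_of_deriv_le (fun t ht => (hf t ht).neg)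
    (fun t ht => (by simp [h0 t ht] : -f' t ≤ 0)) le_rfl ht
  simp only [Pi.neg_apply] at h2
  linarith

lemma hasDerivAt_log_sqrt_div_sqrt {N D : ℝ → ℝ} {N' D' x : ℝ} (hN : HasDerivAt N N' x)
    (hD : HasDerivAt D D' x) (hN0 : 0 < N x) (hD0 : 0 < D x) :
    HasDerivAt (fun y => Real.log (Real.sqrt (N y) / Real.sqrt (D y)))
      (N' / (2 * N x) - D' / (2 * D x)) x := by
  have hn := Real.sqrt_pos.2 hN0
  have hd := Real.sqrt_pos.2 hD0
  have h := ((hN.sqrt hN0.ne').div (hD.sqrt hD0.ne') hd.ne').log (div_pos hn hd).ne'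
  refine h.congr_deriv ?_
  have e1 := Real.sq_sqrt hN0.le
  have e2 := Real.sq_sqrt hD0.le
  simp only [Pi.div_apply]
  generalize Real.sqrt (N x) = n at *
  generalize Real.sqrt (D x) = m at *
  rw [← e1, ← e2]
  field_simp

lemma abs_sub_le_of_abs_deriv_le {f f' : ℝ → ℝ} {b b' : ℝ → ℝ} {C t₁ t₂ : ℝ}
    (hf : ∀ t ∈ Set.Ici (0:ℝ), HasDerivWithinAt f (f' t) (Set.Ici 0) t)
    (hb : ∀ t ∈ Set.Ici (0:ℝ), HasDerivWithinAt b (b' t) (Set.Ici 0) t)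
    (hC : ∀ t ∈ Set.Ici (0:ℝ), |f' t| ≤ C + b' t) (h₁ : 0 ≤ t₁) (h₁₂ : t₁ ≤ t₂) :
    |f t₂ - f t₁| ≤ C * (t₂ - t₁) + (b t₂ - b t₁) := by
  have k1 := image_sub_le_of_deriv_le (C := C) (fun t ht => (hf t ht).sub (hb t ht))
    (fun t ht => by linarith [hC t ht, le_abs_self (f' t)]) h₁ h₁₂
  have k2 := image_sub_le_of_deriv_le (C := C) (fun t ht => (hf t ht).neg.sub (hb t ht))
    (fun t ht => by linarith [hC t ht, neg_abs_le (f' t)]) h₁ h₁₂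
  simp only [Pi.sub_apply, Pi.neg_apply] at k1 k2
  rw [abs_le]
  constructor <;> linarith

lemma two_mul_le_eta {η x : ℝ} (hη : 0 < η) : 2 * x ≤ η + x ^ 2 / η := by
  rw [← sub_nonneg]
  have : η + x ^ 2 / η - 2 * x = (η - x) ^ 2 / η := by field_simp; ring
  rw [this]; positivity

/-- A squeeze with an auxiliary parameter: `f → 0` as soon as, for each small `η > 0`, `|f|` is
eventually bounded by a function whose limit is `C * η`. -/
lemma tendsto_zero_of_bounds {l : Filter ℝ} {f : ℝ → ℝ} (C η₀ : ℝ) (hη₀ : 0 < η₀)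
    (h : ∀ η, 0 < η → η < η₀ → ∃ b : ℝ → ℝ, Tendsto b l (𝓝 (C * η)) ∧ ∀ᶠ ε in l, |f ε| ≤ b ε) :
    Tendsto f l (𝓝 0) := by
  rw [Metric.tendsto_nhds]
  intro e he
  have hC : 0 < |C| + 1 := by positivity
  obtain ⟨b, hb, hfb⟩ := h (min (e / (|C| + 1)) (η₀ / 2)) (by positivity)
    ((min_le_right _ _).trans_lt (by linarith))
  have hlt : C * min (e / (|C| + 1)) (η₀ / 2) < e := by
    have h1 : min (e / (|C| + 1)) (η₀ / 2) ≤ e / (|C| + 1) := min_le_left _ _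
    have h2 : 0 < min (e / (|C| + 1)) (η₀ / 2) := by positivity
    have h3 : (|C| + 1) * min (e / (|C| + 1)) (η₀ / 2) ≤ e := by
      calc _ ≤ (|C| + 1) * (e / (|C| + 1)) := by gcongr
        _ = e := by field_simp
    nlinarith [le_abs_self C]
  filter_upwards [hfb, hb.eventually_lt_const hlt] with ε h1 h2
  rw [Real.dist_eq, sub_zero]
  exact h1.trans_lt h2

/-! ### The reduced system and its estimates -/

/-- The dipole equations for fixed `ε` after elimination of the two conserved quantities, with
`g = Γ / 4π`, `c = cos θ`, `S = sin θ`.  Here `s = y₊ + y₋`, `a = x₊ - x₋`, `X = x₊ + x₋`, while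
`q = 4κε² / (4 y₊ y₋)` measures how close the vortices are to the boundary: `q ≈ 0` for a dipole
far from it, `q ≈ 1` once the vortices have separated.  The impulse is `y₊ - y₋ = -2εc`, and the
energy is encoded by the number `κ` through `1 / |z₊ - z₋|² + 1 / (4 y₊ y₋) = 1 / (4κε²)`. -/
structure Reduced (g c S x₀ y₀ ε κ : ℝ) (s a X q : ℝ → ℝ) : Prop where
  hs : ∀ t ∈ Set.Ici (0:ℝ),
    HasDerivWithinAt s (-(g / (κ * ε)) * a t * (1 - q t) ^ 2) (Set.Ici 0) t
  ha : ∀ t ∈ Set.Ici (0:ℝ), HasDerivWithinAt a ((g / (κ * ε)) * s t * q t ^ 2) (Set.Ici 0) t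
  hX : ∀ t ∈ Set.Ici (0:ℝ),
    HasDerivWithinAt X (-(2 * g * c / κ) * (1 - 2 * q t)) (Set.Ici 0) t
  q0 : ∀ t ∈ Set.Ici (0:ℝ), 0 < q t
  q1 : ∀ t ∈ Set.Ici (0:ℝ), q t < 1
  spos : ∀ t ∈ Set.Ici (0:ℝ), 0 < s t
  sq : ∀ t ∈ Set.Ici (0:ℝ), s t ^ 2 * q t = 4 * κ * ε ^ 2 + 4 * ε ^ 2 * c ^ 2 * q t
  aq : ∀ t ∈ Set.Ici (0:ℝ), (a t ^ 2 + 4 * ε ^ 2 * c ^ 2) * (1 - q t) = 4 * κ * ε ^ 2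
  s0 : s 0 = 2 * y₀
  a0 : a 0 = 2 * ε * S
  X0 : X 0 = 2 * x₀

section Estimates

variable {g c S x₀ y₀ ε κ : ℝ} {s a X q : ℝ → ℝ}

lemma Reduced.a_mono (h : Reduced g c S x₀ y₀ ε κ s a X q) (hg : 0 < g) (hε : 0 < ε) (hκ : 0 < κ)
    {t₁ t₂ : ℝ} (h₁ : 0 ≤ t₁) (h₁₂ : t₁ ≤ t₂) : a t₁ ≤ a t₂ := by
  have := image_sub_le_of_deriv_le (C := 0) (fun t ht => (h.ha t ht).neg) (fun t ht => by
    have := h.spos t ht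
    have : 0 ≤ g / (κ * ε) * s t * q t ^ 2 := by positivity
    linarith) h₁ h₁₂
  simp only [Pi.neg_apply] at this
  linarith

lemma Reduced.le_a (h : Reduced g c S x₀ y₀ ε κ s a X q) (hg : 0 < g) (hε : 0 < ε) (hκ : 0 < κ)
    {t : ℝ} (ht : 0 ≤ t) : 2 * ε * S ≤ a t :=
  h.a0 ▸ h.a_mono hg hε hκ le_rfl ht

lemma Reduced.s_anti (h : Reduced g c S x₀ y₀ ε κ s a X q) (hg : 0 < g) (hε : 0 < ε) (hκ : 0 < κ)
    (hS : 0 < S) {t₁ t₂ : ℝ} (h₁ : 0 ≤ t₁) (h₁₂ : t₁ ≤ t₂) : s t₂ ≤ s t₁ := by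
  have := image_sub_le_of_deriv_le (C := 0) h.hs (fun t ht => by
    have h1 := h.le_a hg hε hκ ht
    have h2 : 0 < 2 * ε * S := by positivity
    have h3 : 0 < a t := by linarith
    have : 0 ≤ g / (κ * ε) * a t * (1 - q t) ^ 2 := by positivity
    linarith) h₁ h₁₂
  linarith

lemma Reduced.sq_ge (h : Reduced g c S x₀ y₀ ε κ s a X q) (hκ : 0 < κ)
    {t : ℝ} (ht : 0 ≤ t) : 4 * κ * ε ^ 2 + 4 * ε ^ 2 * c ^ 2 ≤ s t ^ 2 := by
  have h0 := h.q0 t ht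
  have h1 := h.q1 t ht
  have h2 := h.sq t ht
  have h3 : 0 ≤ 4 * κ * ε ^ 2 * (1 - q t) := mul_nonneg (by positivity) (by linarith)
  nlinarith

lemma Reduced.eps_le_s (h : Reduced g c S x₀ y₀ ε κ s a X q) (hε : 0 < ε) (hκ : 3 / 4 ≤ κ)
    {t : ℝ} (ht : 0 ≤ t) : ε ≤ s t := by
  have h1 := h.sq_ge (by linarith) ht
  have h2 := h.spos t ht
  have h3 : 0 ≤ 4 * ε ^ 2 * c ^ 2 := by positivity
  refine le_of_sq_le_sq ?_ h2.le
  nlinarith [sq_nonneg ε]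

lemma Reduced.q_le (h : Reduced g c S x₀ y₀ ε κ s a X q) (hc : c ^ 2 ≤ 1) (hκ1 : κ ≤ 1)
    {t : ℝ} (ht : 0 ≤ t) : q t ≤ 8 * ε ^ 2 / s t ^ 2 := by
  have h0 := h.q0 t ht
  have h1 := h.q1 t ht
  have h2 := h.sq t ht
  have h4 := h.spos t ht
  rw [le_div_iff₀ (by positivity)]
  have e1 : κ * ε ^ 2 ≤ ε ^ 2 := mul_le_of_le_one_left (sq_nonneg _) hκ1
  have e2 : ε ^ 2 * (c ^ 2 * q t) ≤ ε ^ 2 :=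
    mul_le_of_le_one_right (sq_nonneg _) (by nlinarith [sq_nonneg c])
  nlinarith

lemma Reduced.a_small (h : Reduced g c S x₀ y₀ ε κ s a X q) (hε : 0 < ε) (hκ1 : κ ≤ 1)
    (hc : c ^ 2 ≤ 1) {t : ℝ} (ht : 0 ≤ t) (hst : 4 * ε ≤ s t) : a t ≤ 3 * ε := by
  have h1 := h.q_le hc hκ1 ht
  have h2 : 8 * ε ^ 2 / s t ^ 2 ≤ 1 / 2 := by
    rw [div_le_iff₀ (by have := h.spos t ht; positivity)]
    nlinarith
  have h3 := h.aq t ht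
  refine le_of_sq_le_sq ?_ (by positivity)
  have e1 : κ * ε ^ 2 ≤ ε ^ 2 := mul_le_of_le_one_left (sq_nonneg _) hκ1
  have e2 : 0 ≤ ε ^ 2 * c ^ 2 := by positivity
  nlinarith [sq_nonneg (a t)]

/-- Lower bound for the height of the dipole.  The speed of descent is at most
`(2gS/κ) (1 + 2q/S²)` with `q ≤ 8ε²/s²`; the error is absorbed by the correction `b/s`,
`b = 16ε²/S²`, because `(1 + b/s²) (1 - b/s²) ≤ 1`. -/
lemma Reduced.s_lower (h : Reduced g c S x₀ y₀ ε κ s a X q) (hg : 0 < g) (hε : 0 < ε)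
    (hκ : 3 / 4 ≤ κ) (hκ1 : κ ≤ 1) (hcS : c ^ 2 + S ^ 2 = 1) (hS : 0 < S)
    {t : ℝ} (ht : 0 ≤ t) : 2 * y₀ - 2 * g * S / κ * t - 16 * ε / S ^ 2 ≤ s t := by
  have hκ0 : 0 < κ := by linarith
  set b : ℝ := 16 * ε ^ 2 / S ^ 2 with hb
  have hbpos : 0 < b := by positivity
  have key := image_sub_le_of_deriv_le (C := 2 * g * S / κ)
    (fun t ht => ((h.hs t ht).add
      ((((h.hs t ht).inv (h.spos t ht).ne')).const_mul b)).neg) (fun t ht => by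
    have hs := h.spos t ht
    have hq0 := h.q0 t ht
    have hq1 := h.q1 t ht
    have ha1 := h.le_a hg hε hκ0 ht
    have ha : 0 < a t := lt_of_lt_of_le (by positivity) ha1
    have hq := h.q_le (by nlinarith [sq_nonneg S]) hκ1 ht
    have haq := h.aq t ht
    have hspeed : a t * (1 - q t) ^ 2 ≤ 2 * ε * S * (1 + 2 * q t / S ^ 2) := by
      refine le_of_sq_le_sq ?_ (by positivity)
      have e1 : (a t * (1 - q t) ^ 2) ^ 2
          = 4 * ε ^ 2 * (κ * (1 - q t) ^ 3 - c ^ 2 * (1 - q t) ^ 4) := by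
        linear_combination (1 - q t) ^ 3 * haq
      have e2 : (2 * ε * S * (1 + 2 * q t / S ^ 2)) ^ 2
          = 4 * ε ^ 2 * (S ^ 2 + 4 * q t + 4 * q t ^ 2 / S ^ 2) := by
        field_simp; ring
      rw [e1, e2]
      have e3 : κ * (1 - q t) ^ 3 ≤ 1 :=
        mul_le_one₀ hκ1 (pow_nonneg (by linarith) _) (pow_le_one₀ (by linarith) (by linarith))
      have e4 : 1 - 4 * q t ≤ (1 - q t) ^ 4 := by
        have := one_add_mul_le_pow (a := -q t) (by linarith) 4
        push_cast at this
        linarith [show (1 + -q t) ^ 4 = (1 - q t) ^ 4 by ring]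
      have e5 : 0 ≤ 4 * q t ^ 2 / S ^ 2 := by positivity
      have hc2 : c ^ 2 ≤ 1 := by nlinarith [sq_nonneg S]
      have e6 : c ^ 2 * (1 - 4 * q t) ≤ c ^ 2 * (1 - q t) ^ 4 := by gcongr
      have e7 : c ^ 2 * q t ≤ q t := mul_le_of_le_one_left hq0.le hc2
      gcongr 4 * ε ^ 2 * ?_
      linarith
    have hspeed2 : g / (κ * ε) * a t * (1 - q t) ^ 2 ≤ 2 * g * S / κ * (1 + b / s t ^ 2) := by
      calc g / (κ * ε) * a t * (1 - q t) ^ 2 = g / (κ * ε) * (a t * (1 - q t) ^ 2) := by ring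
        _ ≤ g / (κ * ε) * (2 * ε * S * (1 + 2 * q t / S ^ 2)) := by gcongr
        _ = 2 * g * S / κ * (1 + 2 * q t / S ^ 2) := by field_simp
        _ ≤ 2 * g * S / κ * (1 + 2 * (8 * ε ^ 2 / s t ^ 2) / S ^ 2) := by gcongr
        _ = _ := by rw [hb]; field_simp; ring
    have hnn : 0 ≤ g / (κ * ε) * a t * (1 - q t) ^ 2 := by positivity
    have hv : 0 ≤ 2 * g * S / κ := by positivity
    have e0 : -(-(g / (κ * ε)) * a t * (1 - q t) ^ 2 +
          b * (-(-(g / (κ * ε)) * a t * (1 - q t) ^ 2) / s t ^ 2))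
        = (g / (κ * ε) * a t * (1 - q t) ^ 2) * (1 - b / s t ^ 2) := by ring
    rw [e0]
    rcases le_total (b / s t ^ 2) 1 with h1 | h1
    · calc _ ≤ 2 * g * S / κ * (1 + b / s t ^ 2) * (1 - b / s t ^ 2) :=
            mul_le_mul_of_nonneg_right hspeed2 (by linarith)
        _ = 2 * g * S / κ * (1 - (b / s t ^ 2) ^ 2) := by ring
        _ ≤ _ := mul_le_of_le_one_right hv (by nlinarith [sq_nonneg (b / s t ^ 2)])
    · exact (mul_nonpos_of_nonneg_of_nonpos hnn (by linarith)).trans hv) le_rfl ht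
  simp only [Pi.neg_apply, Pi.add_apply, Pi.inv_apply] at key
  have hst := h.spos t ht
  have h1 : b * (s t)⁻¹ ≤ 16 * ε / S ^ 2 := by
    calc b * (s t)⁻¹ ≤ b * ε⁻¹ := by
          have := h.eps_le_s hε hκ ht
          gcongr
      _ = _ := by rw [hb]; field_simp
  have h2 : 0 ≤ b * (s 0)⁻¹ := by
    have := h.spos 0 (Set.mem_Ici.2 le_rfl)
    positivity
  have h3 := h.s0
  simp only [sub_zero] at key
  linarith

lemma Reduced.g_q_sq_le (h : Reduced g c S x₀ y₀ ε κ s a X q) (hg : 0 < g) (hε : 0 < ε)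
    (hκ : 3 / 4 ≤ κ) (hκ1 : κ ≤ 1) {t : ℝ} (ht : 0 ≤ t) :
    g * q t ^ 2 ≤ g / (κ * ε) * s t * q t ^ 2 := by
  have hκ0 : 0 < κ := by linarith
  have h1 := h.eps_le_s hε hκ ht
  gcongr
  rw [div_mul_eq_mul_div, le_div_iff₀ (by positivity)]
  gcongr
  exact (mul_le_of_le_one_left hε.le hκ1).trans h1

lemma Reduced.le_speed (h : Reduced g c S x₀ y₀ ε κ s a X q) (hg : 0 < g) (hε : 0 < ε)
    (hκ : 0 < κ) (hκ1 : κ ≤ 1) (hS : 0 < S) {t : ℝ} (ht : 0 ≤ t) :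
    2 * g * S * (1 - q t) ^ 2 ≤ g / (κ * ε) * a t * (1 - q t) ^ 2 := by
  have h1 := h.le_a hg hε hκ ht
  refine mul_le_mul_of_nonneg_right ?_ (sq_nonneg _)
  rw [div_mul_eq_mul_div, le_div_iff₀ (by positivity)]
  calc 2 * g * S * (κ * ε) ≤ 2 * g * S * (1 * ε) := by gcongr
    _ = g * (2 * ε * S) := by ring
    _ ≤ _ := by gcongr

/-- Upper bound for the height: the loss of speed is controlled by `q ≤ η/2 + q²/(2η)`, and the
time integral of `q²` by `a`. -/
lemma Reduced.s_upper (h : Reduced g c S x₀ y₀ ε κ s a X q) (hg : 0 < g) (hε : 0 < ε)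
    (hκ : 3 / 4 ≤ κ) (hκ1 : κ ≤ 1) (hS : 0 < S) {η : ℝ} (hη : 0 < η)
    {t : ℝ} (ht : 0 ≤ t) : s t ≤ 2 * y₀ - 2 * g * S * (1 - η) * t + 2 * S / η * a t := by
  have hκ0 : 0 < κ := by linarith
  have key := image_sub_le_of_deriv_le (C := -(2 * g * S * (1 - η)))
    (fun t ht => (h.hs t ht).sub ((h.ha t ht).const_mul (2 * S / η))) (fun t ht => by
      have h1 := h.g_q_sq_le hg hε hκ hκ1 ht
      have h2 := h.le_speed hg hε hκ0 hκ1 hS ht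
      have h3 : 2 * S / η * (g * q t ^ 2) ≤ 2 * S / η * (g / (κ * ε) * s t * q t ^ 2) := by gcongr
      have h4 : 1 - η ≤ (1 - q t) ^ 2 + q t ^ 2 / η := by
        have := two_mul_le_eta (x := q t) hη
        nlinarith [sq_nonneg (q t)]
      have h5 : 2 * g * S * (1 - η) ≤ 2 * g * S * ((1 - q t) ^ 2 + q t ^ 2 / η) := by gcongr
      have h6 : 2 * S / η * (g * q t ^ 2) = 2 * g * S * (q t ^ 2 / η) := by ring
      linarith) le_rfl ht
  simp only [Pi.sub_apply, sub_zero] at key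
  have h1 : 0 ≤ 2 * S / η * a 0 := by rw [h.a0]; positivity
  have := h.s0
  linarith

/-- Before the impact the horizontal velocity is that of the free dipole, up to `q`, whose time
integral is controlled by `a`. -/
lemma Reduced.X_before (h : Reduced g c S x₀ y₀ ε κ s a X q) (hg : 0 < g) (hε : 0 < ε)
    (hκ : 3 / 4 ≤ κ) (hκ1 : κ ≤ 1) (hS : 0 < S) {η : ℝ} (hη : 0 < η) {t : ℝ} (ht : 0 ≤ t) :
    |X t - 2 * x₀ + 2 * g * c / κ * t| ≤ |2 * g * c / κ| * (η * t + a t / (g * η)) := by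
  set w := 2 * g * c / κ with hw
  have key := abs_sub_le_of_abs_deriv_le (C := |w| * η)
    (fun t ht => (h.hX t ht).add ((hasDerivWithinAt_id t _).const_mul w))
    (fun t ht => (h.ha t ht).const_mul (|w| / (g * η))) (fun t ht => by
      have h1 := h.g_q_sq_le hg hε hκ hκ1 ht
      have h0 := h.q0 t ht
      have e : -w * (1 - 2 * q t) + w * 1 = w * (2 * q t) := by ring
      rw [e, abs_mul, abs_of_pos (by positivity : 0 < 2 * q t)]
      calc |w| * (2 * q t) ≤ |w| * (η + q t ^ 2 / η) := by
            gcongr; exact two_mul_le_eta hη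
        _ = |w| * η + |w| / (g * η) * (g * q t ^ 2) := by field_simp
        _ ≤ _ := by gcongr) le_rfl ht
  simp only [Pi.add_apply, id, sub_zero, mul_zero, add_zero, h.X0, h.a0] at key
  have h1 : 0 ≤ |w| / (g * η) * (2 * ε * S) := by positivity
  calc _ = |X t + w * t - 2 * x₀| := by congr 1; ring
    _ ≤ _ := key
    _ ≤ |w| * η * t + |w| / (g * η) * a t := by linarith
    _ = _ := by ring

/-- After the impact the horizontal drift is reversed, up to `1 - q`, whose time integral is
controlled by the height still available. -/
lemma Reduced.X_after (h : Reduced g c S x₀ y₀ ε κ s a X q) (hg : 0 < g) (hε : 0 < ε)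
    (hκ : 0 < κ) (hκ1 : κ ≤ 1) (hS : 0 < S) {η : ℝ} (hη : 0 < η) {t₁ t₂ : ℝ}
    (h₁ : 0 ≤ t₁) (h₁₂ : t₁ ≤ t₂) :
    |X t₂ - X t₁ - 2 * g * c / κ * (t₂ - t₁)| ≤
      |2 * g * c / κ| * (η * (t₂ - t₁) + s t₁ / (2 * g * S * η)) := by
  set w := 2 * g * c / κ with hw
  have key := abs_sub_le_of_abs_deriv_le (C := |w| * η)
    (fun t ht => (h.hX t ht).sub ((hasDerivWithinAt_id t _).const_mul w))
    (fun t ht => ((h.hs t ht).const_mul (|w| / (2 * g * S * η))).neg) (fun t ht => by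
      have h1 := h.le_speed hg hε hκ hκ1 hS ht
      have h0 := h.q1 t ht
      have e : -w * (1 - 2 * q t) - w * 1 = -w * (2 * (1 - q t)) := by ring
      rw [e, abs_mul, abs_of_pos (by linarith : 0 < 2 * (1 - q t)), abs_neg]
      calc |w| * (2 * (1 - q t)) ≤ |w| * (η + (1 - q t) ^ 2 / η) := by
            gcongr; exact two_mul_le_eta hη
        _ = |w| * η + |w| / (2 * g * S * η) * (2 * g * S * (1 - q t) ^ 2) := by field_simp
        _ ≤ |w| * η + |w| / (2 * g * S * η) * (g / (κ * ε) * a t * (1 - q t) ^ 2) := by gcongr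
        _ = _ := by ring) h₁ h₁₂
  simp only [Pi.sub_apply, Pi.neg_apply, id] at key
  have h1 : 0 ≤ |w| / (2 * g * S * η) * s t₂ := by
    have := h.spos t₂ (h₁.trans h₁₂)
    positivity
  calc _ = |X t₂ - w * t₂ - (X t₁ - w * t₁)| := by congr 1; ring
    _ ≤ _ := key
    _ ≤ |w| * η * (t₂ - t₁) + |w| / (2 * g * S * η) * s t₁ := by linarith
    _ = _ := by ring

lemma Reduced.X_lipschitz (h : Reduced g c S x₀ y₀ ε κ s a X q) {t₁ t₂ : ℝ}
    (h₁ : 0 ≤ t₁) (h₁₂ : t₁ ≤ t₂) : |X t₂ - X t₁| ≤ |2 * g * c / κ| * (t₂ - t₁) := by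
  have key := abs_sub_le_of_abs_deriv_le (C := |2 * g * c / κ|) h.hX
    (fun t _ => hasDerivWithinAt_const t _ (0:ℝ)) (fun t ht => by
      have h0 := h.q0 t ht
      have h1 := h.q1 t ht
      rw [abs_mul, abs_neg, add_zero]
      exact mul_le_of_le_one_right (abs_nonneg _) (abs_le.2 ⟨by linarith, by linarith⟩)) h₁ h₁₂
  simpa using key

lemma Reduced.a_upper (h : Reduced g c S x₀ y₀ ε κ s a X q) (hg : 0 < g) (hε : 0 < ε)
    (hκ : 0 < κ) (hκ1 : κ ≤ 1) {t₁ t₂ : ℝ} (h₁ : 0 ≤ t₁) (h₁₂ : t₁ ≤ t₂) :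
    a t₂ - a t₁ ≤ 2 * g * √(1 + c ^ 2) / κ * (t₂ - t₁) := by
  refine image_sub_le_of_deriv_le h.ha (fun t ht => ?_) h₁ h₁₂
  have h0 := h.q0 t ht
  have h1 := h.q1 t ht
  have h2 := h.sq t ht
  have h3 : s t * q t ^ 2 ≤ 2 * ε * √(1 + c ^ 2) := by
    refine le_of_sq_le_sq ?_ (by positivity)
    have e : (s t * q t ^ 2) ^ 2 = 4 * ε ^ 2 * (κ * q t ^ 3 + c ^ 2 * q t ^ 4) := by
      linear_combination q t ^ 3 * h2
    rw [e, mul_pow, Real.sq_sqrt (by positivity)]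
    have e3 : κ * q t ^ 3 ≤ 1 := mul_le_one₀ hκ1 (by positivity) (pow_le_one₀ h0.le h1.le)
    have e4 : c ^ 2 * q t ^ 4 ≤ c ^ 2 :=
      mul_le_of_le_one_right (sq_nonneg _) (pow_le_one₀ h0.le h1.le)
    calc _ ≤ 4 * ε ^ 2 * (1 + c ^ 2) := by gcongr
      _ = _ := by ring
  calc _ = g / (κ * ε) * (s t * q t ^ 2) := by ring
    _ ≤ g / (κ * ε) * (2 * ε * √(1 + c ^ 2)) := by gcongr
    _ = _ := by field_simp

/-- After the impact the vortices separate at the asymptotic rate, up to `1 - q`, whose time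
integral is controlled by the height still available. -/
lemma Reduced.a_lower (h : Reduced g c S x₀ y₀ ε κ s a X q) (hg : 0 < g) (hε : 0 < ε)
    (hκ : 0 < κ) (hκ1 : κ ≤ 1) (hS : 0 < S) {η : ℝ} (hη : 0 < η) {t₁ t₂ : ℝ}
    (h₁ : 0 ≤ t₁) (h₁₂ : t₁ ≤ t₂) :
    2 * g * √(1 + c ^ 2) * (t₂ - t₁)
      - 2 * g * √(1 + c ^ 2) * (η * (t₂ - t₁) + s t₁ / (2 * g * S * η)) ≤ a t₂ - a t₁ := by
  set W := 2 * g * √(1 + c ^ 2) with hW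
  have hW0 : 0 ≤ W := by positivity
  have key := image_sub_le_of_deriv_le (C := -(W * (1 - η)))
    (fun t ht => ((h.hs t ht).const_mul (W / (2 * g * S * η))).sub (h.ha t ht)) (fun t ht => by
      have h0 := h.q0 t ht
      have h1 := h.le_speed hg hε hκ hκ1 hS ht
      have hs := h.spos t ht
      have hsW : W ≤ g / (κ * ε) * s t := by
        have h2 := h.sq_ge hκ ht
        have h3 : 2 * ε * κ * √(1 + c ^ 2) ≤ s t := by
          refine le_of_sq_le_sq (le_trans ?_ h2) hs.le
          rw [mul_pow, Real.sq_sqrt (by positivity)]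
          have e1 : κ ^ 2 ≤ κ := by nlinarith
          have e2 : κ ^ 2 ≤ 1 := by nlinarith
          calc (2 * ε * κ) ^ 2 * (1 + c ^ 2) = 4 * ε ^ 2 * (κ ^ 2 + c ^ 2 * κ ^ 2) := by ring
            _ ≤ 4 * ε ^ 2 * (κ + c ^ 2 * 1) := by gcongr
            _ = _ := by ring
        calc W = g / (κ * ε) * (2 * ε * κ * √(1 + c ^ 2)) := by rw [hW]; field_simp
          _ ≤ _ := by gcongr
      have h4 : 1 - η - (1 - q t) ^ 2 / η ≤ q t ^ 2 := by
        have := two_mul_le_eta (x := 1 - q t) hη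
        nlinarith [sq_nonneg (1 - q t)]
      have h5 : W * (1 - η - (1 - q t) ^ 2 / η) ≤ g / (κ * ε) * s t * q t ^ 2 :=
        calc _ ≤ W * q t ^ 2 := by gcongr
          _ ≤ _ := by gcongr
      have h6 : W / (2 * g * S * η) * (2 * g * S * (1 - q t) ^ 2)
          ≤ W / (2 * g * S * η) * (g / (κ * ε) * a t * (1 - q t) ^ 2) := by gcongr
      have h7 : W / (2 * g * S * η) * (2 * g * S * (1 - q t) ^ 2) = W * ((1 - q t) ^ 2 / η) := by
        field_simp
      linarith) h₁ h₁₂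
  simp only [Pi.sub_apply] at key
  have h1 : 0 ≤ W / (2 * g * S * η) * s t₂ := by
    have := h.spos t₂ (h₁.trans h₁₂)
    positivity
  have h2 : W * (s t₁ / (2 * g * S * η)) = W / (2 * g * S * η) * s t₁ := by ring
  linarith

end Estimates

/-! ### The singular limit of the reduced system -/

section Limits

variable {g c S x₀ y₀ : ℝ} {κ : ℝ → ℝ} {s a X q : ℝ → ℝ → ℝ}

/-- Before the impact. -/
lemma tendsto_before (hg : 0 < g) (hcS : c ^ 2 + S ^ 2 = 1) (hS : 0 < S)
    (hR : ∀ᶠ ε in 𝓝[>] (0:ℝ), Reduced g c S x₀ y₀ ε (κ ε) (s ε) (a ε) (X ε) (q ε))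
    (hκ : ∀ᶠ ε in 𝓝[>] (0:ℝ), 3 / 4 ≤ κ ε ∧ κ ε ≤ 1) (hκ1 : Tendsto κ (𝓝[>] 0) (𝓝 1))
    {t : ℝ} (ht : 0 ≤ t) (ht' : g * S * t < y₀) :
    Tendsto (fun ε => s ε t) (𝓝[>] 0) (𝓝 (2 * y₀ - 2 * g * S * t)) ∧
    Tendsto (fun ε => a ε t) (𝓝[>] 0) (𝓝 0) ∧
    Tendsto (fun ε => X ε t) (𝓝[>] 0) (𝓝 (2 * x₀ - 2 * g * c * t)) := by
  have hid : Tendsto (fun ε : ℝ => ε) (𝓝[>] 0) (𝓝 0) := nhdsWithin_le_nhds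
  have hpos : ∀ᶠ ε in 𝓝[>] (0:ℝ), 0 < ε := eventually_mem_nhdsWithin
  have hc : c ^ 2 ≤ 1 := by nlinarith [sq_nonneg S]
  have hdiv : ∀ x : ℝ, Tendsto (fun ε => x / κ ε) (𝓝[>] 0) (𝓝 x) := fun x => by
    have := (tendsto_const_nhds (x := x)).div hκ1 one_ne_zero
    rwa [div_one] at this
  have hlow : Tendsto (fun ε => 2 * y₀ - 2 * g * S / κ ε * t - 16 * ε / S ^ 2) (𝓝[>] 0)
      (𝓝 (2 * y₀ - 2 * g * S * t)) := by
    have := (((hdiv (2 * g * S)).mul_const t).const_sub (2 * y₀)).sub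
      ((hid.const_mul 16).div_const (S ^ 2))
    simpa using this
  have ha : Tendsto (fun ε => a ε t) (𝓝[>] 0) (𝓝 0) := by
    have h4 : Tendsto (fun ε : ℝ => 4 * ε) (𝓝[>] 0) (𝓝 0) := by simpa using hid.const_mul 4
    have h3 : Tendsto (fun ε : ℝ => 3 * ε) (𝓝[>] 0) (𝓝 0) := by simpa using hid.const_mul 3
    have hlt := h4.eventually_lt hlow (by linarith)
    refine tendsto_of_tendsto_of_tendsto_of_le_of_le' tendsto_const_nhds h3 ?_ ?_
    · filter_upwards [hR, hκ, hpos] with ε h k hε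
      exact le_trans (by positivity) (h.le_a hg hε (by linarith) ht)
    · filter_upwards [hR, hκ, hpos, hlt] with ε h k hε hl
      exact h.a_small hε k.2 hc ht (hl.le.trans (h.s_lower hg hε k.1 k.2 hcS hS ht))
  refine ⟨?_, ha, ?_⟩
  · rw [← tendsto_sub_nhds_zero_iff]
    refine tendsto_zero_of_bounds (2 * g * S * t) 1 one_pos fun η hη _ =>
      ⟨fun ε => 2 * g * S * η * t + 2 * S / η * a ε t
        + ((2 * y₀ - 2 * g * S * t) - (2 * y₀ - 2 * g * S / κ ε * t - 16 * ε / S ^ 2)), ?_, ?_⟩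
    · have := ((ha.const_mul (2 * S / η)).const_add (2 * g * S * η * t)).add
        (hlow.const_sub (2 * y₀ - 2 * g * S * t))
      convert this using 2
      ring
    · filter_upwards [hR, hκ, hpos] with ε h k hε
      have h1 := h.s_lower hg hε k.1 k.2 hcS hS ht
      have h2 := h.s_upper hg hε k.1 k.2 hS hη ht
      have h3 : 0 ≤ a ε t := le_trans (by positivity) (h.le_a hg hε (by linarith) ht)
      have h4 : 0 ≤ 2 * S / η * a ε t := by positivity
      have h5 : 0 ≤ 2 * g * S * η * t := by positivity
      have h6 : 2 * g * S * t ≤ 2 * g * S / κ ε * t := by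
        gcongr
        rw [le_div_iff₀ (by linarith)]
        exact mul_le_of_le_one_right (by positivity) k.2
      have h7 : 0 ≤ 16 * ε / S ^ 2 := by positivity
      rw [abs_le]
      constructor <;> linarith
  · rw [← tendsto_sub_nhds_zero_iff]
    have hw := hdiv (2 * g * c)
    refine tendsto_zero_of_bounds (|2 * g * c| * t) 1 one_pos fun η hη _ =>
      ⟨fun ε => |2 * g * c / κ ε| * (η * t + a ε t / (g * η))
        + |2 * g * c / κ ε - 2 * g * c| * t, ?_, ?_⟩
    · have := (hw.abs.mul ((ha.div_const (g * η)).const_add (η * t))).add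
        (((hw.sub_const (2 * g * c)).abs).mul_const t)
      convert this using 2
      simp
      ring
    · filter_upwards [hR, hκ, hpos] with ε h k hε
      have h1 := h.X_before hg hε k.1 k.2 hS hη ht
      have e : X ε t - (2 * x₀ - 2 * g * c * t) = (X ε t - 2 * x₀ + 2 * g * c / κ ε * t)
        - (2 * g * c / κ ε - 2 * g * c) * t := by ring
      rw [e]
      refine (abs_sub _ _).trans (add_le_add h1 ?_)
      rw [abs_mul, abs_of_nonneg ht]

/-- At the time of impact, by equicontinuity. -/
lemma tendsto_impact (hg : 0 < g) (hcS : c ^ 2 + S ^ 2 = 1) (hS : 0 < S) (hy₀ : 0 < y₀)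
    (hR : ∀ᶠ ε in 𝓝[>] (0:ℝ), Reduced g c S x₀ y₀ ε (κ ε) (s ε) (a ε) (X ε) (q ε))
    (hκ : ∀ᶠ ε in 𝓝[>] (0:ℝ), 3 / 4 ≤ κ ε ∧ κ ε ≤ 1) (hκ1 : Tendsto κ (𝓝[>] 0) (𝓝 1))
    {T : ℝ} (hT : g * S * T = y₀) :
    Tendsto (fun ε => s ε T) (𝓝[>] 0) (𝓝 0) ∧
    Tendsto (fun ε => a ε T) (𝓝[>] 0) (𝓝 0) ∧
    Tendsto (fun ε => X ε T) (𝓝[>] 0) (𝓝 (2 * x₀ - 2 * g * c * T)) := by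
  have hpos : ∀ᶠ ε in 𝓝[>] (0:ℝ), 0 < ε := eventually_mem_nhdsWithin
  have hdiv : ∀ x : ℝ, Tendsto (fun ε => x / κ ε) (𝓝[>] 0) (𝓝 x) := fun x => by
    have := (tendsto_const_nhds (x := x)).div hκ1 one_ne_zero
    rwa [div_one] at this
  have hT0 : 0 < T := by
    by_contra! hn
    nlinarith [mul_pos hg hS]
  have hb : ∀ η, 0 < η → η < T → _ := fun η hη hηT =>
    tendsto_before (t := T - η) hg hcS hS hR hκ hκ1 (by linarith)
      (by nlinarith [mul_pos (mul_pos hg hS) hη])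
  refine ⟨?_, ?_, ?_⟩
  · refine tendsto_zero_of_bounds (2 * g * S) T hT0 fun η hη hηT =>
      ⟨fun ε => s ε (T - η), ?_, ?_⟩
    · convert (hb η hη hηT).1 using 2
      linear_combination 2 * hT
    · filter_upwards [hR, hκ, hpos] with ε h k hε
      rw [abs_of_pos (h.spos T hT0.le)]
      exact h.s_anti hg hε (by linarith) hS (by linarith) (by linarith)
  · refine tendsto_zero_of_bounds (2 * g * √(1 + c ^ 2)) T hT0 fun η hη hηT =>
      ⟨fun ε => a ε (T - η) + 2 * g * √(1 + c ^ 2) / κ ε * η, ?_, ?_⟩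
    · convert (hb η hη hηT).2.1.add ((hdiv (2 * g * √(1 + c ^ 2))).mul_const η) using 2
      ring
    · filter_upwards [hR, hκ, hpos] with ε h k hε
      rw [abs_of_nonneg (le_trans (by positivity) (h.le_a hg hε (by linarith) hT0.le))]
      have := h.a_upper hg hε (by linarith) k.2 (t₁ := T - η) (t₂ := T)
        (by linarith) (by linarith)
      rw [sub_sub_cancel] at this
      linarith
  · rw [← tendsto_sub_nhds_zero_iff]
    refine tendsto_zero_of_bounds (2 * |2 * g * c|) T hT0 fun η hη hηT =>
      ⟨fun ε => |X ε (T - η) - (2 * x₀ - 2 * g * c * (T - η))| + |2 * g * c / κ ε| * η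
        + |2 * g * c| * η, ?_, ?_⟩
    · have := (((hb η hη hηT).2.2.sub_const (2 * x₀ - 2 * g * c * (T - η))).abs.add
        ((hdiv (2 * g * c)).abs.mul_const η)).add_const (|2 * g * c| * η)
      convert this using 2
      simp
      ring
    · filter_upwards [hR, hκ, hpos] with ε h k hε
      have := h.X_lipschitz (t₁ := T - η) (t₂ := T) (by linarith) (by linarith)
      rw [sub_sub_cancel] at this
      have e : X ε T - (2 * x₀ - 2 * g * c * T) = (X ε (T - η) - (2 * x₀ - 2 * g * c * (T - η)))
        + (X ε T - X ε (T - η)) + 2 * g * c * η := by ring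
      rw [e]
      refine (abs_add_three _ _ _).trans ?_
      rw [abs_mul (2 * g * c) η, abs_of_pos hη]
      gcongr

/-- After the impact. -/
lemma tendsto_after (hg : 0 < g) (hcS : c ^ 2 + S ^ 2 = 1) (hS : 0 < S) (hy₀ : 0 < y₀)
    (hR : ∀ᶠ ε in 𝓝[>] (0:ℝ), Reduced g c S x₀ y₀ ε (κ ε) (s ε) (a ε) (X ε) (q ε))
    (hκ : ∀ᶠ ε in 𝓝[>] (0:ℝ), 3 / 4 ≤ κ ε ∧ κ ε ≤ 1) (hκ1 : Tendsto κ (𝓝[>] 0) (𝓝 1))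
    {T t : ℝ} (hT : g * S * T = y₀) (ht : T ≤ t) :
    Tendsto (fun ε => s ε t) (𝓝[>] 0) (𝓝 0) ∧
    Tendsto (fun ε => a ε t) (𝓝[>] 0) (𝓝 (2 * g * √(1 + c ^ 2) * (t - T))) ∧
    Tendsto (fun ε => X ε t) (𝓝[>] 0) (𝓝 (2 * x₀ - 2 * g * c * T + 2 * g * c * (t - T))) := by
  have hpos : ∀ᶠ ε in 𝓝[>] (0:ℝ), 0 < ε := eventually_mem_nhdsWithin
  have hdiv : ∀ x : ℝ, Tendsto (fun ε => x / κ ε) (𝓝[>] 0) (𝓝 x) := fun x => by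
    have := (tendsto_const_nhds (x := x)).div hκ1 one_ne_zero
    rwa [div_one] at this
  have hT0 : 0 ≤ T := by
    by_contra! hn
    nlinarith [mul_pos hg hS]
  have hτ : 0 ≤ t - T := by linarith
  obtain ⟨hs, ha, hX⟩ := tendsto_impact hg hcS hS hy₀ hR hκ hκ1 hT
  refine ⟨?_, ?_, ?_⟩
  · refine tendsto_of_tendsto_of_tendsto_of_le_of_le' tendsto_const_nhds hs ?_ ?_
    · filter_upwards [hR] with ε h using (h.spos t (hT0.trans ht)).le
    · filter_upwards [hR, hκ, hpos] with ε h k hε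
      exact h.s_anti hg hε (by linarith) hS hT0 ht
  · rw [← tendsto_sub_nhds_zero_iff]
    set W := 2 * g * √(1 + c ^ 2) with hW
    have hW0 : 0 ≤ W := by positivity
    refine tendsto_zero_of_bounds (W * (t - T)) 1 one_pos fun η hη _ =>
      ⟨fun ε => a ε T + (W / κ ε - W) * (t - T)
        + W * (η * (t - T) + s ε T / (2 * g * S * η)), ?_, ?_⟩
    · have := (ha.add (((hdiv W).sub_const W).mul_const (t - T))).add
        (((hs.div_const (2 * g * S * η)).const_add (η * (t - T))).const_mul W)
      convert this using 2
      simp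
      ring
    · filter_upwards [hR, hκ, hpos] with ε h k hε
      have h1 := h.a_upper hg hε (by linarith) k.2 hT0 ht
      have h2 := h.a_lower hg hε (by linarith) k.2 hS hη hT0 ht
      rw [← hW] at h1 h2
      have h3 : 0 ≤ a ε T := le_trans (by positivity) (h.le_a hg hε (by linarith) hT0)
      have h4 : W * (t - T) ≤ W / κ ε * (t - T) := by
        gcongr
        rw [le_div_iff₀ (by linarith)]
        exact mul_le_of_le_one_right hW0 k.2
      have h5 := h.spos T hT0
      have h6 : 0 ≤ W * (η * (t - T) + s ε T / (2 * g * S * η)) := by positivity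
      rw [abs_le]
      constructor <;> linarith
  · rw [← tendsto_sub_nhds_zero_iff]
    have hw := hdiv (2 * g * c)
    refine tendsto_zero_of_bounds (|2 * g * c| * (t - T)) 1 one_pos fun η hη _ =>
      ⟨fun ε => |X ε T - (2 * x₀ - 2 * g * c * T)|
        + |2 * g * c / κ ε| * (η * (t - T) + s ε T / (2 * g * S * η))
        + |2 * g * c / κ ε - 2 * g * c| * (t - T), ?_, ?_⟩
    · have := ((hX.sub_const (2 * x₀ - 2 * g * c * T)).abs.add
        (hw.abs.mul ((hs.div_const (2 * g * S * η)).const_add (η * (t - T))))).add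
        (((hw.sub_const (2 * g * c)).abs).mul_const (t - T))
      convert this using 2
      simp
      ring
    · filter_upwards [hR, hκ, hpos] with ε h k hε
      have h1 := h.X_after hg hε (by linarith) k.2 hS hη hT0 ht
      have e : X ε t - (2 * x₀ - 2 * g * c * T + 2 * g * c * (t - T))
        = (X ε T - (2 * x₀ - 2 * g * c * T))
        + (X ε t - X ε T - 2 * g * c / κ ε * (t - T))
        + (2 * g * c / κ ε - 2 * g * c) * (t - T) := by ring
      rw [e]
      refine (abs_add_three _ _ _).trans ?_
      rw [abs_mul (2 * g * c / κ ε - 2 * g * c), abs_of_nonneg hτ]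
      gcongr

end Limits

/-! ### From the Kirchhoff equations to the reduced system -/

/-- The Kirchhoff Hamiltonian of two vortices of circulations `±εΓ`, with
`A = ε²Γ²/2π` and `B = ε²Γ²/4π`. -/
noncomputable def ham (A B xp yp xm ym : ℝ) : ℝ :=
  -A * Real.log (√((xp - xm) ^ 2 + (yp + ym) ^ 2) / √((xp - xm) ^ 2 + (yp - ym) ^ 2))
    + B * Real.log (2 * yp) + B * Real.log (2 * ym)

section Ham

variable {A B xp yp xm ym : ℝ}

lemma ham_image_pos (hp : 0 < yp) (hm : 0 < ym) : 0 < (xp - xm) ^ 2 + (yp + ym) ^ 2 := by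
  positivity

lemma ham_dist_pos (hne : (xp, yp) ≠ (xm, ym)) : 0 < (xp - xm) ^ 2 + (yp - ym) ^ 2 := by
  by_contra! h
  have h1 : xp - xm = 0 := by nlinarith [sq_nonneg (xp - xm), sq_nonneg (yp - ym)]
  have h2 : yp - ym = 0 := by nlinarith [sq_nonneg (xp - xm), sq_nonneg (yp - ym)]
  exact hne (Prod.ext (sub_eq_zero.1 h1) (sub_eq_zero.1 h2))

lemma deriv_ham_yp (hp : 0 < yp) (hm : 0 < ym) (hne : (xp, yp) ≠ (xm, ym)) :
    deriv (fun y => ham A B xp y xm ym) yp =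
      -A * ((yp + ym) / ((xp - xm) ^ 2 + (yp + ym) ^ 2)
        - (yp - ym) / ((xp - xm) ^ 2 + (yp - ym) ^ 2)) + B / yp := by
  have hN := ham_image_pos (xp := xp) (xm := xm) hp hm
  have hD := ham_dist_pos hne
  have h1 := (((hasDerivAt_id yp).add_const ym).pow 2).const_add ((xp - xm) ^ 2)
  have h2 := (((hasDerivAt_id yp).sub_const ym).pow 2).const_add ((xp - xm) ^ 2)
  have h3 := ((hasDerivAt_id yp).const_mul 2).log (mul_pos two_pos hp).ne'
  have h := (((hasDerivAt_log_sqrt_div_sqrt h1 h2 hN hD).const_mul (-A)).add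
    (h3.const_mul B)).add_const (B * Real.log (2 * ym))
  refine (HasDerivAt.deriv (f := fun y => ham A B xp y xm ym) h).trans ?_
  simp
  field_simp

lemma deriv_ham_ym (hp : 0 < yp) (hm : 0 < ym) (hne : (xp, yp) ≠ (xm, ym)) :
    deriv (fun y => ham A B xp yp xm y) ym =
      -A * ((yp + ym) / ((xp - xm) ^ 2 + (yp + ym) ^ 2)
        + (yp - ym) / ((xp - xm) ^ 2 + (yp - ym) ^ 2)) + B / ym := by
  have hN := ham_image_pos (xp := xp) (xm := xm) hp hm
  have hD := ham_dist_pos hne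
  have h1 := (((hasDerivAt_id ym).const_add yp).pow 2).const_add ((xp - xm) ^ 2)
  have h2 := (((hasDerivAt_id ym).const_sub yp).pow 2).const_add ((xp - xm) ^ 2)
  have h3 := ((hasDerivAt_id ym).const_mul 2).log (mul_pos two_pos hm).ne'
  have h := (((hasDerivAt_log_sqrt_div_sqrt h1 h2 hN hD).const_mul (-A)).add_const
    (B * Real.log (2 * yp))).add (h3.const_mul B)
  refine (HasDerivAt.deriv (f := fun y => ham A B xp yp xm y) h).trans ?_
  simp
  field_simp
  ring

lemma deriv_ham_xp (hp : 0 < yp) (hm : 0 < ym) (hne : (xp, yp) ≠ (xm, ym)) :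
    deriv (fun x => ham A B x yp xm ym) xp =
      -A * ((xp - xm) / ((xp - xm) ^ 2 + (yp + ym) ^ 2)
        - (xp - xm) / ((xp - xm) ^ 2 + (yp - ym) ^ 2)) := by
  have hN := ham_image_pos (xp := xp) (xm := xm) hp hm
  have hD := ham_dist_pos hne
  have h1 := (((hasDerivAt_id xp).sub_const xm).pow 2).add_const ((yp + ym) ^ 2)
  have h2 := (((hasDerivAt_id xp).sub_const xm).pow 2).add_const ((yp - ym) ^ 2)
  have h := (((hasDerivAt_log_sqrt_div_sqrt h1 h2 hN hD).const_mul (-A)).add_const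
    (B * Real.log (2 * yp))).add_const (B * Real.log (2 * ym))
  refine (HasDerivAt.deriv (f := fun x => ham A B x yp xm ym) h).trans ?_
  simp only [id, Pi.pow_apply, Nat.cast_ofNat, Nat.reduceSub, pow_one]
  field_simp

lemma deriv_ham_xm (hp : 0 < yp) (hm : 0 < ym) (hne : (xp, yp) ≠ (xm, ym)) :
    deriv (fun x => ham A B xp yp x ym) xm =
      A * ((xp - xm) / ((xp - xm) ^ 2 + (yp + ym) ^ 2)
        - (xp - xm) / ((xp - xm) ^ 2 + (yp - ym) ^ 2)) := by
  have hN := ham_image_pos (xp := xp) (xm := xm) hp hm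
  have hD := ham_dist_pos hne
  have h1 := (((hasDerivAt_id xm).const_sub xp).pow 2).add_const ((yp + ym) ^ 2)
  have h2 := (((hasDerivAt_id xm).const_sub xp).pow 2).add_const ((yp - ym) ^ 2)
  have h := (((hasDerivAt_log_sqrt_div_sqrt h1 h2 hN hD).const_mul (-A)).add_const
    (B * Real.log (2 * yp))).add_const (B * Real.log (2 * ym))
  refine (HasDerivAt.deriv (f := fun x => ham A B xp yp x ym) h).trans ?_
  simp
  field_simp
  ring

end Ham

/-- The impulse `y₊ - y₋` and `1 / |z₊ - z₋|² + 1 / (4 y₊ y₋)`, a function of the energy and the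
impulse, are conserved; eliminating them gives the reduced system. -/
lemma reduced_of_velocities {g c S x₀ y₀ ε κ : ℝ} (hε : 0 < ε) (hκ : 0 < κ)
    (hcS : c ^ 2 + S ^ 2 = 1)
    (hκdef : κ * (y₀ ^ 2 + ε ^ 2 * S ^ 2) = y₀ ^ 2 - ε ^ 2 * c ^ 2)
    {xp yp xm ym dxp dyp dxm dym : ℝ → ℝ}
    (hdom : ∀ t ∈ Set.Ici (0:ℝ), 0 < yp t ∧ 0 < ym t ∧ (xp t, yp t) ≠ (xm t, ym t))
    (hxp : ∀ t ∈ Set.Ici (0:ℝ), HasDerivWithinAt xp (dxp t) (Set.Ici 0) t)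
    (hyp : ∀ t ∈ Set.Ici (0:ℝ), HasDerivWithinAt yp (dyp t) (Set.Ici 0) t)
    (hxm : ∀ t ∈ Set.Ici (0:ℝ), HasDerivWithinAt xm (dxm t) (Set.Ici 0) t)
    (hym : ∀ t ∈ Set.Ici (0:ℝ), HasDerivWithinAt ym (dym t) (Set.Ici 0) t)
    (vxp : ∀ t ∈ Set.Ici (0:ℝ), dxp t =
      -(2 * g * ε) * ((yp t + ym t) / ((xp t - xm t) ^ 2 + (yp t + ym t) ^ 2)
        - (yp t - ym t) / ((xp t - xm t) ^ 2 + (yp t - ym t) ^ 2)) + g * ε / yp t)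
    (vyp : ∀ t ∈ Set.Ici (0:ℝ), dyp t =
      2 * g * ε * ((xp t - xm t) / ((xp t - xm t) ^ 2 + (yp t + ym t) ^ 2)
        - (xp t - xm t) / ((xp t - xm t) ^ 2 + (yp t - ym t) ^ 2)))
    (vxm : ∀ t ∈ Set.Ici (0:ℝ), dxm t =
      2 * g * ε * ((yp t + ym t) / ((xp t - xm t) ^ 2 + (yp t + ym t) ^ 2)
        + (yp t - ym t) / ((xp t - xm t) ^ 2 + (yp t - ym t) ^ 2)) - g * ε / ym t)
    (vym : ∀ t ∈ Set.Ici (0:ℝ), dym t =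
      2 * g * ε * ((xp t - xm t) / ((xp t - xm t) ^ 2 + (yp t + ym t) ^ 2)
        - (xp t - xm t) / ((xp t - xm t) ^ 2 + (yp t - ym t) ^ 2)))
    (ixp : xp 0 = x₀ + ε * S) (iyp : yp 0 = y₀ - ε * c)
    (ixm : xm 0 = x₀ - ε * S) (iym : ym 0 = y₀ + ε * c) :
    (∀ t ∈ Set.Ici (0:ℝ), yp t - ym t = -(2 * ε * c)) ∧
    Reduced g c S x₀ y₀ ε κ (fun t => yp t + ym t) (fun t => xp t - xm t)
      (fun t => xp t + xm t) (fun t => κ * ε ^ 2 / (yp t * ym t)) := by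
  have himp : ∀ t ∈ Set.Ici (0:ℝ), yp t - ym t = -(2 * ε * c) := fun t ht => by
    have := eq_of_deriv_eq_zero (fun t ht => (hyp t ht).sub (hym t ht))
      (fun t ht => by rw [vyp t ht, vym t ht, sub_self]) ht
    simp only [Pi.sub_apply, iyp, iym] at this
    linarith
  have hDpos : ∀ t ∈ Set.Ici (0:ℝ), 0 < (xp t - xm t) ^ 2 + (yp t - ym t) ^ 2 := fun t ht =>
    ham_dist_pos (hdom t ht).2.2
  have hNpos : ∀ t ∈ Set.Ici (0:ℝ), 0 < (xp t - xm t) ^ 2 + (yp t + ym t) ^ 2 := fun t ht =>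
    ham_image_pos (hdom t ht).1 (hdom t ht).2.1
  have hen : ∀ t ∈ Set.Ici (0:ℝ),
      ((xp t - xm t) ^ 2 + (yp t - ym t) ^ 2)⁻¹ + (4 * (yp t * ym t))⁻¹
        = (4 * κ * ε ^ 2)⁻¹ := fun t ht => by
    have hcons := eq_of_deriv_eq_zero (fun t ht =>
      (((((hxp t ht).sub (hxm t ht)).pow 2).add (((hyp t ht).sub (hym t ht)).pow 2)).inv
        (hDpos t ht).ne').add
      ((((hyp t ht).mul (hym t ht)).const_mul 4).inv
        (by have := hdom t ht; exact (mul_pos four_pos (mul_pos this.1 this.2.1)).ne')))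
      (fun t ht => by
        have hD := hDpos t ht
        have hN := hNpos t ht
        obtain ⟨hp, hm, -⟩ := hdom t ht
        simp only [Pi.add_apply, Pi.sub_apply, Pi.mul_apply, Pi.pow_apply,
          vxp t ht, vyp t ht, vxm t ht, vym t ht]
        generalize xp t = a at *
        generalize xm t = b at *
        generalize yp t = u at *
        generalize ym t = v at *
        field_simp
        ring) ht
    have h0 := hDpos 0 (Set.mem_Ici.2 le_rfl)
    obtain ⟨hp, hm, -⟩ := hdom 0 (Set.mem_Ici.2 le_rfl)
    simp only [Pi.add_apply, Pi.sub_apply, Pi.mul_apply, Pi.pow_apply, Pi.inv_apply] at hcons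
    refine hcons.trans ?_
    rw [iyp] at hp
    rw [iym] at hm
    rw [ixp, ixm, iyp, iym]
    have e1 : (x₀ + ε * S - (x₀ - ε * S)) ^ 2 + (y₀ - ε * c - (y₀ + ε * c)) ^ 2 = 4 * ε ^ 2 := by
      linear_combination 4 * ε ^ 2 * hcS
    have hP : 0 < (y₀ - ε * c) * (y₀ + ε * c) := mul_pos hp hm
    have e2 : (y₀ - ε * c) * (y₀ + ε * c) = κ * (y₀ ^ 2 + ε ^ 2 * S ^ 2) := by
      linear_combination -hκdef
    rw [e1]
    generalize (y₀ - ε * c) * (y₀ + ε * c) = P at *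
    field_simp
    have e3 : P + ε ^ 2 = y₀ ^ 2 + ε ^ 2 * S ^ 2 := by
      linear_combination e2 + hκdef - ε ^ 2 * hcS
    linear_combination κ * e3 - e2
  -- `1 - q = 4κε² / |z₊ - z₋|²`
  have hq : ∀ t ∈ Set.Ici (0:ℝ), 1 - κ * ε ^ 2 / (yp t * ym t)
      = 4 * κ * ε ^ 2 / ((xp t - xm t) ^ 2 + (yp t - ym t) ^ 2) := fun t ht => by
    have h := hen t ht
    have hD := hDpos t ht
    obtain ⟨hp, hm, -⟩ := hdom t ht
    rw [eq_div_iff hD.ne']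
    generalize (xp t - xm t) ^ 2 + (yp t - ym t) ^ 2 = D at *
    field_simp at h ⊢
    linear_combination -h
  -- the same relation, with the denominators cleared
  have hrel : ∀ t ∈ Set.Ici (0:ℝ), κ * ε ^ 2 * ((xp t - xm t) ^ 2 + (yp t + ym t) ^ 2)
      = yp t * ym t * ((xp t - xm t) ^ 2 + (yp t - ym t) ^ 2) := fun t ht => by
    have h := hen t ht
    have hD := hDpos t ht
    obtain ⟨hp, hm, -⟩ := hdom t ht
    have e : (xp t - xm t) ^ 2 + (yp t + ym t) ^ 2
      = ((xp t - xm t) ^ 2 + (yp t - ym t) ^ 2) + 4 * (yp t * ym t) := by ring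
    rw [e]
    generalize (xp t - xm t) ^ 2 + (yp t - ym t) ^ 2 = D at *
    field_simp at h
    linear_combination h
  refine ⟨himp, ?_, ?_, ?_, ?_, ?_, ?_, ?_, ?_, ?_, ?_, ?_⟩
  · intro t ht
    refine ((hyp t ht).add (hym t ht)).congr_deriv ?_
    have hD := hDpos t ht
    have hN := hNpos t ht
    have h := hrel t ht
    rw [hq t ht, vyp t ht, vym t ht]
    have e : (xp t - xm t) ^ 2 + (yp t + ym t) ^ 2
      = ((xp t - xm t) ^ 2 + (yp t - ym t) ^ 2) + 4 * (yp t * ym t) := by ring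
    generalize (xp t - xm t) ^ 2 + (yp t - ym t) ^ 2 = D at *
    generalize (xp t - xm t) ^ 2 + (yp t + ym t) ^ 2 = N at *
    generalize xp t - xm t = a at *
    field_simp
    have h' : D * (D - N) = -(4 * κ * ε ^ 2 * N) := by linear_combination -D * e + 4 * h
    linear_combination 4 * g * a * h'
  · intro t ht
    refine ((hxp t ht).sub (hxm t ht)).congr_deriv ?_
    have hD := hDpos t ht
    have hN := hNpos t ht
    have h := hrel t ht
    obtain ⟨hp, hm, -⟩ := hdom t ht
    rw [vxp t ht, vxm t ht]
    have e : (xp t - xm t) ^ 2 + (yp t + ym t) ^ 2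
      = ((xp t - xm t) ^ 2 + (yp t - ym t) ^ 2) + 4 * (yp t * ym t) := by ring
    generalize (xp t - xm t) ^ 2 + (yp t - ym t) ^ 2 = D at *
    generalize (xp t - xm t) ^ 2 + (yp t + ym t) ^ 2 = N at *
    generalize yp t = u at *
    generalize ym t = v at *
    have hP : 0 < u * v := mul_pos hp hm
    have e1 : g * ε / u = g * ε * v / (u * v) := by field_simp
    have e2 : g * ε / v = g * ε * u / (u * v) := by field_simp
    have e3 : κ * ε ^ 2 / (u * v) = D / N := by
      rw [div_eq_div_iff hP.ne' hN.ne']; linarith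
    have e4 : g / (κ * ε) = g * ε * N / (u * v * D) := by
      rw [div_eq_div_iff (by positivity) (by positivity)]
      linear_combination -g * h
    rw [e1, e2, e3, e4]
    generalize u * v = P at *
    field_simp
    linear_combination g * (u + v) * D * e
  · intro t ht
    refine ((hxp t ht).add (hxm t ht)).congr_deriv ?_
    have hD := hDpos t ht
    have hN := hNpos t ht
    have h := hq t ht
    have hi := himp t ht
    obtain ⟨hp, hm, -⟩ := hdom t ht
    rw [vxp t ht, vxm t ht]
    have e : 1 - 2 * (κ * ε ^ 2 / (yp t * ym t))
        = 4 * κ * ε ^ 2 / ((xp t - xm t) ^ 2 + (yp t - ym t) ^ 2)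
          - κ * ε ^ 2 / (yp t * ym t) := by linarith
    have hw : -(2 * g * c / κ) = g * (yp t - ym t) / (κ * ε) := by
      rw [hi]; field_simp
    rw [e, hw]
    generalize (xp t - xm t) ^ 2 + (yp t - ym t) ^ 2 = D at *
    generalize (xp t - xm t) ^ 2 + (yp t + ym t) ^ 2 = N at *
    generalize yp t = u at *
    generalize ym t = v at *
    field_simp
    ring
  · intro t ht
    obtain ⟨hp, hm, -⟩ := hdom t ht
    positivity
  · intro t ht
    have h := hq t ht
    have hD := hDpos t ht
    have : 0 < 4 * κ * ε ^ 2 / ((xp t - xm t) ^ 2 + (yp t - ym t) ^ 2) := by positivity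
    linarith
  · intro t ht
    exact add_pos (hdom t ht).1 (hdom t ht).2.1
  · intro t ht
    obtain ⟨hp, hm, -⟩ := hdom t ht
    have e : 4 * ε ^ 2 * c ^ 2 = (yp t - ym t) ^ 2 := by rw [himp t ht]; ring
    rw [e]
    field_simp
    ring
  · intro t ht
    have hD := hDpos t ht
    have e : 4 * ε ^ 2 * c ^ 2 = (yp t - ym t) ^ 2 := by rw [himp t ht]; ring
    rw [e, hq t ht]
    field_simp
  · simp only [iyp, iym]; ring
  · simp only [ixp, ixm]; ring
  · simp only [ixp, ixm]; ring

/-! ### The fission theorem -/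

lemma tendsto_norm_pair {u v : ℝ → ℝ} {z w : ℝ → ℝ × ℝ} {l : Filter ℝ}
    (hw : ∀ᶠ ε in l, w ε = z ε - (u ε, v ε)) {p r : ℝ}
    (hz₁ : Tendsto (fun ε => (z ε).1) l (𝓝 p)) (hz₂ : Tendsto (fun ε => (z ε).2) l (𝓝 r))
    (hu : Tendsto u l (𝓝 p)) (hv : Tendsto v l (𝓝 r)) :
    Tendsto (fun ε => ‖w ε‖) l (𝓝 0) := by
  have h1 := hz₁.sub hu
  have h2 := hz₂.sub hv
  rw [sub_self] at h1 h2
  have h3 : Tendsto (fun ε => z ε - (u ε, v ε)) l (𝓝 0) := h1.prodMk_nhds h2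
  have h4 := h3.norm
  rw [norm_zero] at h4
  refine h4.congr' ?_
  filter_upwards [hw] with ε h
  rw [h]

/-- Fission rule for a vortex dipole in the upper half-plane.  For each `ε` with
`2ε < y₀`, `(Xp ε, Yp ε)` and `(Xm ε, Ym ε)` solve the half-plane Kirchhoff system
with circulations `εΓ` and `−εΓ` and Hamiltonian `Hε`, starting from the dipole
configuration `(x₀ ± ε sin θ, y₀ ∓ ε cos θ)`.  Then, as `ε → 0⁺`, for every fixed
time `t ≥ 0`, `t ≠ t* = 4πy₀/(Γ sin θ)`, the vortices converge to the comparison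
trajectories: a straight-line dipole motion for `t < t*`, and after `t*` two vortices
traveling along the boundary in opposite directions at speeds
`Γ/(4π(√(1 + cos²θ) ∓ cos θ))` and heights `ε(√(1 + cos²θ) ∓ cos θ)`. -/
theorem dipole_fission
    (Γ θ x₀ y₀ : ℝ) (hΓ : 0 < Γ) (hθ : θ ∈ Set.Ioo 0 Real.pi) (hy₀ : 0 < y₀)
    (tstar xhit : ℝ)
    (htstar : tstar = 4 * Real.pi * y₀ / (Γ * Real.sin θ))
    (hxhit : xhit = x₀ - y₀ * (Real.cos θ / Real.sin θ))
    (Hε : ℝ → ℝ → ℝ → ℝ → ℝ → ℝ)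
    (hHε : ∀ ε xp yp xm ym, Hε ε xp yp xm ym =
      -(ε ^ 2 * Γ ^ 2 / (2 * Real.pi)) *
          Real.log (Real.sqrt ((xp - xm) ^ 2 + (yp + ym) ^ 2) /
            Real.sqrt ((xp - xm) ^ 2 + (yp - ym) ^ 2))
        + (ε ^ 2 * Γ ^ 2 / (4 * Real.pi)) * Real.log (2 * yp)
        + (ε ^ 2 * Γ ^ 2 / (4 * Real.pi)) * Real.log (2 * ym))
    (Xp Yp Xm Ym dXp dYp dXm dYm : ℝ → ℝ → ℝ)
    -- the solutions stay in the domain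
    (hdom : ∀ ε ∈ Set.Ioo 0 (y₀ / 2), ∀ t ∈ Set.Ici (0:ℝ),
      0 < Yp ε t ∧ 0 < Ym ε t ∧ (Xp ε t, Yp ε t) ≠ (Xm ε t, Ym ε t))
    -- derivatives along `[0, ∞)`
    (hdXp : ∀ ε ∈ Set.Ioo 0 (y₀ / 2), ∀ t ∈ Set.Ici (0:ℝ),
      HasDerivWithinAt (Xp ε) (dXp ε t) (Set.Ici 0) t)
    (hdYp : ∀ ε ∈ Set.Ioo 0 (y₀ / 2), ∀ t ∈ Set.Ici (0:ℝ),
      HasDerivWithinAt (Yp ε) (dYp ε t) (Set.Ici 0) t)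
    (hdXm : ∀ ε ∈ Set.Ioo 0 (y₀ / 2), ∀ t ∈ Set.Ici (0:ℝ),
      HasDerivWithinAt (Xm ε) (dXm ε t) (Set.Ici 0) t)
    (hdYm : ∀ ε ∈ Set.Ioo 0 (y₀ / 2), ∀ t ∈ Set.Ici (0:ℝ),
      HasDerivWithinAt (Ym ε) (dYm ε t) (Set.Ici 0) t)
    -- the Kirchhoff equations `εΓ ẋ₊ = ∂H/∂y₊`, `εΓ ẏ₊ = −∂H/∂x₊`,
    -- `−εΓ ẋ₋ = ∂H/∂y₋`, `−εΓ ẏ₋ = −∂H/∂x₋`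
    (heq : ∀ ε ∈ Set.Ioo 0 (y₀ / 2), ∀ t ∈ Set.Ici (0:ℝ),
      ε * Γ * dXp ε t =
        deriv (fun y => Hε ε (Xp ε t) y (Xm ε t) (Ym ε t)) (Yp ε t) ∧
      ε * Γ * dYp ε t =
        -deriv (fun x => Hε ε x (Yp ε t) (Xm ε t) (Ym ε t)) (Xp ε t) ∧
      -(ε * Γ) * dXm ε t =
        deriv (fun y => Hε ε (Xp ε t) (Yp ε t) (Xm ε t) y) (Ym ε t) ∧
      -(ε * Γ) * dYm ε t =
        -deriv (fun x => Hε ε (Xp ε t) (Yp ε t) x (Ym ε t)) (Xm ε t))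
    -- initial data
    (hinit : ∀ ε ∈ Set.Ioo 0 (y₀ / 2),
      Xp ε 0 = x₀ + ε * Real.sin θ ∧ Yp ε 0 = y₀ - ε * Real.cos θ ∧
      Xm ε 0 = x₀ - ε * Real.sin θ ∧ Ym ε 0 = y₀ + ε * Real.cos θ)
    -- the comparison trajectories
    (Ztp Ztm : ℝ → ℝ → ℝ × ℝ)
    (hZtp : ∀ ε t, Ztp ε t =
      if t < tstar then
        (x₀ + ε * Real.sin θ - Γ / (4 * Real.pi) * t * Real.cos θ,
          y₀ - ε * Real.cos θ - Γ / (4 * Real.pi) * t * Real.sin θ)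
      else
        (xhit + (t - tstar) * Γ /
            (4 * Real.pi * (Real.sqrt (1 + Real.cos θ ^ 2) - Real.cos θ)),
          ε * (Real.sqrt (1 + Real.cos θ ^ 2) - Real.cos θ)))
    (hZtm : ∀ ε t, Ztm ε t =
      if t < tstar then
        (x₀ - ε * Real.sin θ - Γ / (4 * Real.pi) * t * Real.cos θ,
          y₀ + ε * Real.cos θ - Γ / (4 * Real.pi) * t * Real.sin θ)
      else
        (xhit - (t - tstar) * Γ /
            (4 * Real.pi * (Real.sqrt (1 + Real.cos θ ^ 2) + Real.cos θ)),
          ε * (Real.sqrt (1 + Real.cos θ ^ 2) + Real.cos θ))) :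
    ∀ t : ℝ, 0 ≤ t → t ≠ tstar →
      Tendsto (fun ε => ‖(Xp ε t, Yp ε t) - Ztp ε t‖) (𝓝[>] (0:ℝ)) (𝓝 0) ∧
      Tendsto (fun ε => ‖(Xm ε t, Ym ε t) - Ztm ε t‖) (𝓝[>] (0:ℝ)) (𝓝 0) := by
  set g : ℝ := Γ / (4 * Real.pi) with hg_def
  set c : ℝ := Real.cos θ with hc_def
  set S : ℝ := Real.sin θ with hS_def
  have hπ := Real.pi_pos
  have hg : 0 < g := by positivity
  have hS : 0 < S := Real.sin_pos_of_mem_Ioo hθ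
  have hcS : c ^ 2 + S ^ 2 = 1 := Real.cos_sq_add_sin_sq θ
  have hT : g * S * tstar = y₀ := by rw [htstar, hg_def]; field_simp
  have hhit : xhit = x₀ - g * c * tstar := by
    rw [hxhit]
    nth_rewrite 1 [← hT]
    field_simp
  have hpos : ∀ᶠ ε in 𝓝[>] (0:ℝ), ε ∈ Set.Ioo 0 (y₀ / 2) := Ioo_mem_nhdsGT (by positivity)
  have hid : Tendsto (fun ε : ℝ => ε) (𝓝[>] 0) (𝓝 0) := nhdsWithin_le_nhds
  -- the energy of the initial configuration fixes `κ`
  set κ : ℝ → ℝ := fun ε => (y₀ ^ 2 - ε ^ 2 * c ^ 2) / (y₀ ^ 2 + ε ^ 2 * S ^ 2) with hκ_def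
  have hκb : ∀ ε ∈ Set.Ioo 0 (y₀ / 2), 3 / 4 ≤ κ ε ∧ κ ε ≤ 1 := by
    rintro ε ⟨h0, h1⟩
    have hsq : ε ^ 2 ≤ y₀ ^ 2 / 4 := by nlinarith
    have e1 : ε ^ 2 * c ^ 2 + ε ^ 2 * S ^ 2 = ε ^ 2 := by rw [← mul_add, hcS, mul_one]
    have e2 : 0 ≤ ε ^ 2 * c ^ 2 := by positivity
    have e3 : 0 ≤ ε ^ 2 * S ^ 2 := by positivity
    have hden : 0 < y₀ ^ 2 + ε ^ 2 * S ^ 2 := by positivity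
    exact ⟨(le_div_iff₀ hden).2 (by linarith), (div_le_one hden).2 (by linarith)⟩
  have hκ1 : Tendsto κ (𝓝[>] 0) (𝓝 1) := by
    have h : ContinuousAt κ 0 := by
      refine ContinuousAt.div (by fun_prop) (by fun_prop) ?_
      simp [hy₀.ne']
    have h0 : κ 0 = 1 := by simp [hκ_def, hy₀.ne']
    exact h0 ▸ h.tendsto.mono_left nhdsWithin_le_nhds
  have hred : ∀ ε ∈ Set.Ioo 0 (y₀ / 2),
      (∀ t ∈ Set.Ici (0:ℝ), Yp ε t - Ym ε t = -(2 * ε * c)) ∧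
      Reduced g c S x₀ y₀ ε (κ ε) (fun t => Yp ε t + Ym ε t) (fun t => Xp ε t - Xm ε t)
        (fun t => Xp ε t + Xm ε t) (fun t => κ ε * ε ^ 2 / (Yp ε t * Ym ε t)) := by
    intro ε hε
    have hε0 : 0 < ε := hε.1
    have hvel := fun t (ht : t ∈ Set.Ici (0:ℝ)) => heq ε hε t ht
    have hH : ∀ xp yp xm ym, Hε ε xp yp xm ym =
        ham (ε ^ 2 * Γ ^ 2 / (2 * Real.pi)) (ε ^ 2 * Γ ^ 2 / (4 * Real.pi)) xp yp xm ym :=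
      hHε ε
    simp only [hH] at hvel
    have hεΓ : ε * Γ ≠ 0 := by positivity
    have hA : ε ^ 2 * Γ ^ 2 / (2 * Real.pi) = ε * Γ * (2 * g * ε) := by
      rw [hg_def]; field_simp; ring
    have hB : ε ^ 2 * Γ ^ 2 / (4 * Real.pi) = ε * Γ * (g * ε) := by
      rw [hg_def]; field_simp
    rw [hA, hB] at hvel
    obtain ⟨i1, i2, i3, i4⟩ := hinit ε hε
    refine reduced_of_velocities hε0 (by linarith [(hκb ε hε).1]) hcS
      (div_mul_cancel₀ _ (by positivity)) (hdom ε hε) (hdXp ε hε) (hdYp ε hε) (hdXm ε hε)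
      (hdYm ε hε) (fun t ht => ?_) (fun t ht => ?_) (fun t ht => ?_) (fun t ht => ?_) i1 i2 i3 i4
    all_goals
      obtain ⟨hp, hm, hne⟩ := hdom ε hε t ht
      obtain ⟨v1, v2, v3, v4⟩ := hvel t ht
      apply mul_left_cancel₀ hεΓ
    · rw [deriv_ham_yp hp hm hne] at v1
      linear_combination v1
    · rw [deriv_ham_xp hp hm hne] at v2
      linear_combination v2
    · rw [deriv_ham_ym hp hm hne] at v3
      linear_combination -v3
    · rw [deriv_ham_xm hp hm hne] at v4
      linear_combination -v4
  have hR : ∀ᶠ ε in 𝓝[>] (0:ℝ), Reduced g c S x₀ y₀ ε (κ ε)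
      ((fun ε t => Yp ε t + Ym ε t) ε) ((fun ε t => Xp ε t - Xm ε t) ε)
      ((fun ε t => Xp ε t + Xm ε t) ε)
      ((fun ε t => κ ε * ε ^ 2 / (Yp ε t * Ym ε t)) ε) := by
    filter_upwards [hpos] with ε h using (hred ε h).2
  have hκ : ∀ᶠ ε in 𝓝[>] (0:ℝ), 3 / 4 ≤ κ ε ∧ κ ε ≤ 1 := by
    filter_upwards [hpos] with ε h using hκb ε h
  intro t ht htne
  -- the two vortices are recovered from sums and differences
  have hd : Tendsto (fun ε => Yp ε t - Ym ε t) (𝓝[>] 0) (𝓝 0) := by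
    have : Tendsto (fun ε : ℝ => -(2 * ε * c)) (𝓝[>] 0) (𝓝 0) := by
      simpa using ((hid.const_mul 2).mul_const c).neg
    refine this.congr' ?_
    filter_upwards [hpos] with ε h using ((hred ε h).1 t ht).symm
  have recover : ∀ {Ls La LX : ℝ}, Tendsto (fun ε => Yp ε t + Ym ε t) (𝓝[>] 0) (𝓝 Ls) →
      Tendsto (fun ε => Xp ε t - Xm ε t) (𝓝[>] 0) (𝓝 La) →
      Tendsto (fun ε => Xp ε t + Xm ε t) (𝓝[>] 0) (𝓝 LX) →
      Tendsto (fun ε => Xp ε t) (𝓝[>] 0) (𝓝 ((LX + La) / 2)) ∧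
      Tendsto (fun ε => Xm ε t) (𝓝[>] 0) (𝓝 ((LX - La) / 2)) ∧
      Tendsto (fun ε => Yp ε t) (𝓝[>] 0) (𝓝 (Ls / 2)) ∧
      Tendsto (fun ε => Ym ε t) (𝓝[>] 0) (𝓝 (Ls / 2)) := by
    intro Ls La LX h1 h2 h3
    refine ⟨((h3.add h2).div_const 2).congr fun ε => by ring,
      ((h3.sub h2).div_const 2).congr fun ε => by ring, ?_, ?_⟩
    · rw [← add_zero Ls]
      exact ((h1.add hd).div_const 2).congr fun ε => by ring
    · rw [← sub_zero Ls]
      exact ((h1.sub hd).div_const 2).congr fun ε => by ring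
  have hlin : ∀ p r : ℝ, Tendsto (fun ε : ℝ => p + ε * r) (𝓝[>] 0) (𝓝 p) := fun p r => by
    simpa using (hid.mul_const r).const_add p
  rcases lt_or_gt_of_ne htne with hlt | hgt
  · obtain ⟨hs, ha, hX⟩ := tendsto_before hg hcS hS hR hκ hκ1 ht (by
      rw [← hT]; exact mul_lt_mul_of_pos_left hlt (by positivity))
    obtain ⟨h1, h2, h3, h4⟩ := recover hs ha hX
    constructor
    · refine tendsto_norm_pair (z := fun ε => (Xp ε t, Yp ε t))
        (Eventually.of_forall fun ε => by rw [hZtp, if_pos hlt]) h1 h3 ?_ ?_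
      · convert hlin ((2 * x₀ - 2 * g * c * t + 0) / 2) S using 2
        ring
      · convert hlin ((2 * y₀ - 2 * g * S * t) / 2) (-c) using 2
        ring
    · refine tendsto_norm_pair (z := fun ε => (Xm ε t, Ym ε t))
        (Eventually.of_forall fun ε => by rw [hZtm, if_pos hlt]) h2 h4 ?_ ?_
      · convert hlin ((2 * x₀ - 2 * g * c * t - 0) / 2) (-S) using 2
        ring
      · convert hlin ((2 * y₀ - 2 * g * S * t) / 2) c using 2
        ring
  · obtain ⟨hs, ha, hX⟩ := tendsto_after hg hcS hS hy₀ hR hκ hκ1 hT hgt.le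
    obtain ⟨h1, h2, h3, h4⟩ := recover hs ha hX
    -- `(√(1 + c²) - c) (√(1 + c²) + c) = 1`: each height is the inverse of the other one
    have hsq : √(1 + c ^ 2) ^ 2 = 1 + c ^ 2 := Real.sq_sqrt (by positivity)
    have hprod : (√(1 + c ^ 2) - c) * (√(1 + c ^ 2) + c) = 1 := by linear_combination hsq
    have hne1 : √(1 + c ^ 2) - c ≠ 0 := left_ne_zero_of_mul_eq_one hprod
    have hne2 : √(1 + c ^ 2) + c ≠ 0 := right_ne_zero_of_mul_eq_one hprod
    have v1 : (t - tstar) * Γ / (4 * Real.pi * (√(1 + c ^ 2) - c))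
        = g * (√(1 + c ^ 2) + c) * (t - tstar) := by
      rw [hg_def, div_eq_iff (by positivity)]
      field_simp
      linear_combination -hprod
    have v2 : (t - tstar) * Γ / (4 * Real.pi * (√(1 + c ^ 2) + c))
        = g * (√(1 + c ^ 2) - c) * (t - tstar) := by
      rw [hg_def, div_eq_iff (by positivity)]
      field_simp
      linear_combination -hprod
    constructor
    · refine tendsto_norm_pair (z := fun ε => (Xp ε t, Yp ε t))
        (Eventually.of_forall fun ε => by rw [hZtp, if_neg hgt.not_gt]) h1 h3 ?_ ?_
      · convert tendsto_const_nhds using 2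
        rw [v1, hhit]
        ring
      · simpa using hlin 0 (√(1 + c ^ 2) - c)
    · refine tendsto_norm_pair (z := fun ε => (Xm ε t, Ym ε t))
        (Eventually.of_forall fun ε => by rw [hZtm, if_neg hgt.not_gt]) h2 h4 ?_ ?_
      · convert tendsto_const_nhds using 2
        rw [v2, hhit]
        ring
      · simpa using hlin 0 (√(1 + c ^ 2) + c)
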